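/- The real span 𝔲(2)^j = span_ℝ{ jE₁₁, jE₂₂, E₂₁ − E₁₂, j(E₁₂ + E₂₁) } is a 4-dimensional Lie subalgebra of 𝔰𝔭(2) which is canonically embedded with respect to the decomposition 𝔤 = 𝔨 ⊕ 𝔭, i.e. 𝔲(2)^j = (𝔲(2)^j ∩ 𝔨) ⊕ (𝔲(2)^j ∩ 𝔭), with 𝔲(2)^j ∩ 𝔨 = ℝ·jE₂₂ and 𝔲(2)^j ∩ 𝔭 = span{e₁, e₃, e₅}. (This subalgebra gives rise to the Lagrangian totally geodesic ℝP³_{ℂ,1/2}(2) in nearly Kähler ℂP³.) -/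

import Mathlib

/-!
`𝔲(2)ʲ` consists of the matrices `!![a j, -c + d j; c + d j, b j]` with `a b c d : ℝ`. In these
coordinates (`mem_u2j`) linear independence of the generators and closure under the bracket are
entrywise computations. The generator `jE₂₂` lies in `𝔨`, while the other three generators are
nonzero multiples of `e₁, e₃, e₅ ∈ 𝔭`. Hence `𝔲(2)ʲ` splits along `𝔨 ⊕ 𝔭`: an element of `𝔨` is
diagonal with upper left entry in `ℝ i`, which forces `a = c = d = 0` (`u2j_inf_kAlg`), and an
element of `𝔭` has zero lower right entry, which forces `b = 0` (`u2j_inf_pAlg`).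
-/

/- Setup: the homogeneous nearly Kähler ℂP³ = Sp(2)/(U(1)×Sp(1));
𝔤 = 𝔰𝔭(2) = 𝔨 ⊕ 𝔭 as in the paper. -/

noncomputable section
open Matrix

abbrev Mq := Matrix (Fin 2) (Fin 2) (Quaternion ℝ)

def qi : Quaternion ℝ := ⟨0, 1, 0, 0⟩
def qj : Quaternion ℝ := ⟨0, 0, 1, 0⟩
def qk : Quaternion ℝ := ⟨0, 0, 0, 1⟩

def e1 : Mq := (Real.sqrt 2)⁻¹ • !![qj, 0; 0, 0]
def e2 : Mq := (Real.sqrt 2)⁻¹ • !![qk, 0; 0, 0]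
def e3 : Mq := (2 : ℝ)⁻¹ • !![0, -1; 1, 0]
def e4 : Mq := (2 : ℝ)⁻¹ • !![0, qi; qi, 0]
def e5 : Mq := (2 : ℝ)⁻¹ • !![0, qj; qj, 0]
def e6 : Mq := (2 : ℝ)⁻¹ • !![0, qk; qk, 0]

/-- `𝔨 = {diag(a i, q) : a ∈ ℝ, q ∈ Im ℍ}`. -/
def kAlg : Submodule ℝ Mq :=
  Submodule.span ℝ {!![qi, 0; 0, 0], !![0, 0; 0, qi], !![0, 0; 0, qj], !![0, 0; 0, qk]}

/-- `𝔭`, the orthogonal complement of `𝔨` in `𝔰𝔭(2)`. -/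
def pAlg : Submodule ℝ Mq := Submodule.span ℝ {e1, e2, e3, e4, e5, e6}

/-- `𝔤 = 𝔰𝔭(2) = 𝔨 ⊕ 𝔭`. -/
def gAlg : Submodule ℝ Mq := kAlg ⊔ pAlg

/-- `𝔲(2)ʲ = span{jE₁₁, jE₂₂, E₂₁ − E₁₂, j(E₁₂ + E₂₁)}`. -/
def u2j : Submodule ℝ Mq :=
  Submodule.span ℝ {!![qj, 0; 0, 0], !![0, 0; 0, qj], !![0, -1; 1, 0], !![0, qj; qj, 0]}

section
open scoped Quaternion

/-- The quaternion `a + b i + c j + d k`. -/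
def quat (a b c d : ℝ) : Quaternion ℝ := ⟨a, b, c, d⟩

@[simp] theorem quat_re (a b c d : ℝ) : (quat a b c d).re = a := rfl
@[simp] theorem quat_imI (a b c d : ℝ) : (quat a b c d).imI = b := rfl
@[simp] theorem quat_imJ (a b c d : ℝ) : (quat a b c d).imJ = c := rfl
@[simp] theorem quat_imK (a b c d : ℝ) : (quat a b c d).imK = d := rfl

theorem qi_eq : qi = quat 0 1 0 0 := rfl
theorem qj_eq : qj = quat 0 0 1 0 := rfl
theorem qk_eq : qk = quat 0 0 0 1 := rfl

/-- `𝔲(2)ʲ` in real coordinates on its four generators. -/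
theorem mem_u2j (X : Mq) : X ∈ u2j ↔ ∃ a b c d : ℝ,
    X = !![quat 0 0 a 0, quat (-c) 0 d 0; quat c 0 d 0, quat 0 0 b 0] := by
  have key : ∀ a b c d : ℝ,
      (a • !![qj, 0; 0, 0] + (b • !![0, 0; 0, qj] + (c • !![0, -1; 1, 0] + d • !![0, qj; qj, 0])) :
        Mq) = !![quat 0 0 a 0, quat (-c) 0 d 0; quat c 0 d 0, quat 0 0 b 0] := by
    intro a b c d
    refine Matrix.ext fun i j => ?_
    fin_cases i <;> fin_cases j <;> apply Quaternion.ext <;> simp [qj_eq]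
  simp only [u2j, Submodule.mem_span_insert, Submodule.mem_span_singleton]
  constructor
  · rintro ⟨a, _, ⟨b, _, ⟨c, _, ⟨d, rfl⟩, rfl⟩, rfl⟩, rfl⟩
    exact ⟨a, b, c, d, key a b c d⟩
  · rintro ⟨a, b, c, d, rfl⟩
    exact ⟨a, _, ⟨b, _, ⟨c, _, ⟨d, rfl⟩, rfl⟩, rfl⟩, (key a b c d).symm⟩

/-- `𝔨` in real coordinates on its four generators. -/
theorem mem_kAlg (X : Mq) : X ∈ kAlg ↔ ∃ a b c d : ℝ,
    X = !![quat 0 a 0 0, 0; 0, quat 0 b c d] := by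
  have key : ∀ a b c d : ℝ,
      (a • !![qi, 0; 0, 0] + (b • !![0, 0; 0, qi] + (c • !![0, 0; 0, qj] + d • !![0, 0; 0, qk])) :
        Mq) = !![quat 0 a 0 0, 0; 0, quat 0 b c d] := by
    intro a b c d
    refine Matrix.ext fun i j => ?_
    fin_cases i <;> fin_cases j <;> apply Quaternion.ext <;> simp [qi_eq, qj_eq, qk_eq]
  simp only [kAlg, Submodule.mem_span_insert, Submodule.mem_span_singleton]
  constructor
  · rintro ⟨a, _, ⟨b, _, ⟨c, _, ⟨d, rfl⟩, rfl⟩, rfl⟩, rfl⟩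
    exact ⟨a, b, c, d, key a b c d⟩
  · rintro ⟨a, b, c, d, rfl⟩
    exact ⟨a, _, ⟨b, _, ⟨c, _, ⟨d, rfl⟩, rfl⟩, rfl⟩, (key a b c d).symm⟩

theorem lower_right_eq_zero_of_mem_pAlg {X : Mq} (hX : X ∈ pAlg) : X 1 1 = 0 := by
  simp only [pAlg, Submodule.mem_span_insert, Submodule.mem_span_singleton] at hX
  obtain ⟨a, _, ⟨b, _, ⟨c, _, ⟨d, _, ⟨e, _, ⟨f, rfl⟩, rfl⟩, rfl⟩, rfl⟩, rfl⟩, rfl⟩ := hX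
  simp [e1, e2, e3, e4, e5, e6]

/-- The span of `e₁, e₃, e₅` consists of the elements of `𝔲(2)ʲ` with zero lower right entry. -/
theorem mem_span_e135 (X : Mq) : X ∈ Submodule.span ℝ {e1, e3, e5} ↔ ∃ a c d : ℝ,
    X = !![quat 0 0 a 0, quat (-c) 0 d 0; quat c 0 d 0, 0] := by
  have key : ∀ a c d : ℝ, (a • e1 + (c • e3 + d • e5) : Mq) =
      !![quat 0 0 (a * (Real.sqrt 2)⁻¹) 0, quat (-(c * 2⁻¹)) 0 (d * 2⁻¹) 0;
        quat (c * 2⁻¹) 0 (d * 2⁻¹) 0, 0] := by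
    intro a c d
    refine Matrix.ext fun i j => ?_
    fin_cases i <;> fin_cases j <;> apply Quaternion.ext <;> simp [e1, e3, e5, qj_eq]
  simp only [Submodule.mem_span_insert, Submodule.mem_span_singleton]
  constructor
  · rintro ⟨a, _, ⟨c, _, ⟨d, rfl⟩, rfl⟩, rfl⟩
    exact ⟨_, _, _, key a c d⟩
  · rintro ⟨a, c, d, rfl⟩
    refine ⟨a * Real.sqrt 2, _, ⟨c * 2, _, ⟨d * 2, rfl⟩, rfl⟩, ?_⟩
    rw [key]
    have h2 : Real.sqrt 2 ≠ 0 := by positivity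
    simp [h2]

theorem span_e135_le_pAlg : Submodule.span ℝ {e1, e3, e5} ≤ pAlg := by
  apply Submodule.span_mono
  rintro x (rfl | rfl | rfl) <;> simp

theorem finrank_u2j : Module.finrank ℝ u2j = 4 := by
  let v : Fin 4 → Mq :=
    ![!![qj, 0; 0, 0], !![0, 0; 0, qj], !![0, -1; 1, 0], !![0, qj; qj, 0]]
  have hv : LinearIndependent ℝ v := by
    rw [Fintype.linearIndependent_iff]
    intro g hg
    have h00 := congrArg (fun M : Mq => (M 0 0).imJ) hg
    have h11 := congrArg (fun M : Mq => (M 1 1).imJ) hg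
    have h10 := congrArg (fun M : Mq => (M 1 0).re) hg
    have h10' := congrArg (fun M : Mq => (M 1 0).imJ) hg
    simp [v, Fin.sum_univ_four, qj_eq] at h00 h11 h10 h10'
    intro i
    fin_cases i <;> assumption
  have hr : u2j = Submodule.span ℝ (Set.range v) := by
    simp only [u2j, v, Matrix.range_cons, Matrix.range_empty, Set.union_empty, Set.singleton_union]
  rw [hr, finrank_span_eq_card hv, Fintype.card_fin]

theorem lie_mem_u2j (X : Mq) (hX : X ∈ u2j) (Y : Mq) (hY : Y ∈ u2j) : ⁅X, Y⁆ ∈ u2j := by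
  obtain ⟨a, b, c, d, rfl⟩ := (mem_u2j X).1 hX
  obtain ⟨a', b', c', d', rfl⟩ := (mem_u2j Y).1 hY
  refine (mem_u2j _).2 ⟨2 * (d * c' - c * d'), 2 * (c * d' - d * c'),
    a * d' - d * a' + d * b' - b * d', c * a' - a * c' + b * c' - c * b', ?_⟩
  rw [Ring.lie_def]
  refine Matrix.ext fun i j => ?_
  fin_cases i <;> fin_cases j <;> apply Quaternion.ext <;>
    simp <;> ring

theorem u2j_inf_kAlg : u2j ⊓ kAlg = Submodule.span ℝ {!![0, 0; 0, qj]} := by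
  have key : ∀ b : ℝ, (b • !![0, 0; 0, qj] : Mq) = !![0, 0; 0, quat 0 0 b 0] := by
    intro b
    refine Matrix.ext fun i j => ?_
    fin_cases i <;> fin_cases j <;> apply Quaternion.ext <;> simp [qj_eq]
  ext X
  rw [Submodule.mem_inf, Submodule.mem_span_singleton]
  constructor
  · rintro ⟨hu, hk⟩
    obtain ⟨a, b, c, d, rfl⟩ := (mem_u2j X).1 hu
    obtain ⟨a', b', c', d', h⟩ := (mem_kAlg _).1 hk
    have h00 := congrArg (fun M : Mq => (M 0 0).imJ) h
    have h10 := congrArg (fun M : Mq => (M 1 0).re) h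
    have h10' := congrArg (fun M : Mq => (M 1 0).imJ) h
    simp at h00 h10 h10'
    subst h00 h10 h10'
    refine ⟨b, ?_⟩
    rw [key]
    refine Matrix.ext fun i j => ?_
    fin_cases i <;> fin_cases j <;> apply Quaternion.ext <;> simp
  · rintro ⟨b, rfl⟩
    exact ⟨Submodule.smul_mem _ _ (Submodule.subset_span (by simp)),
      Submodule.smul_mem _ _ (Submodule.subset_span (by simp))⟩

theorem u2j_inf_pAlg : u2j ⊓ pAlg = Submodule.span ℝ {e1, e3, e5} := by
  ext X
  rw [Submodule.mem_inf]
  constructor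
  · rintro ⟨hu, hp⟩
    obtain ⟨a, b, c, d, rfl⟩ := (mem_u2j X).1 hu
    have h11 := lower_right_eq_zero_of_mem_pAlg hp
    simp only [Matrix.of_apply, Matrix.cons_val_one, Matrix.cons_val_fin_one] at h11
    rw [h11]
    exact (mem_span_e135 _).2 ⟨a, c, d, rfl⟩
  · intro h
    refine ⟨?_, span_e135_le_pAlg h⟩
    obtain ⟨a, c, d, rfl⟩ := (mem_span_e135 X).1 h
    exact (mem_u2j _).2 ⟨a, 0, c, d, rfl⟩

/-- The generator `jE₂₂` spans the `𝔨`-part, the other three generators lie in the `𝔭`-part. -/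
theorem u2j_eq_sup : u2j = (u2j ⊓ kAlg) ⊔ (u2j ⊓ pAlg) := by
  apply le_antisymm _ (sup_le inf_le_left inf_le_left)
  rw [u2j_inf_kAlg, u2j_inf_pAlg]
  intro X hX
  obtain ⟨a, b, c, d, rfl⟩ := (mem_u2j X).1 hX
  refine Submodule.mem_sup.2 ⟨b • !![0, 0; 0, qj], Submodule.mem_span_singleton.2 ⟨b, rfl⟩, _,
    (mem_span_e135 _).2 ⟨a, c, d, rfl⟩, ?_⟩
  refine Matrix.ext fun i j => ?_
  fin_cases i <;> fin_cases j <;> apply Quaternion.ext <;> simp [qj_eq]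

end

/-- `𝔲(2)ʲ = span{jE₁₁, jE₂₂, E₂₁−E₁₂, j(E₁₂+E₂₁)}` is a
4-dimensional Lie subalgebra of `𝔰𝔭(2)` which is canonically embedded, with
`𝔲(2)ʲ ∩ 𝔨 = ℝ·jE₂₂` and `𝔲(2)ʲ ∩ 𝔭 = span{e₁, e₃, e₅}`. It gives rise to
the Lagrangian totally geodesic `ℝP³_{ℂ,1/2}(2)` in nearly Kähler `ℂP³`. -/
theorem u2j_canonically_embedded :
    Module.finrank ℝ u2j = 4 ∧
    u2j ≤ gAlg ∧
    (∀ X ∈ u2j, ∀ Y ∈ u2j, ⁅X, Y⁆ ∈ u2j) ∧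
    u2j = (u2j ⊓ kAlg) ⊔ (u2j ⊓ pAlg) ∧
    u2j ⊓ kAlg = Submodule.span ℝ {!![0, 0; 0, qj]} ∧
    u2j ⊓ pAlg = Submodule.span ℝ {e1, e3, e5} := by
  refine ⟨finrank_u2j, ?_, lie_mem_u2j, u2j_eq_sup, u2j_inf_kAlg, u2j_inf_pAlg⟩
  rw [u2j_eq_sup]
  exact sup_le_sup inf_le_right inf_le_right

end
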